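/- arXiv:2003.05274 — 2 statements merged into one kernel-verified Lean document; each statement's English description precedes it below -/
import Mathlib

section
/- Under Assumptions 1, 2 and 3, the sequence Q_n is asymptotically efficient (R_Q(B) exists and equals 2 I_P(B)) if and only if λ_Q^B(−2) = 2 λ_Q^B(−1), where λ_Q^B(k) := sup_{w∈ℝ} {k w − I_Q^B(w)} is the Legendre–Fenchel transform of I_Q^B(w) := inf_{m∈B̄} J_Q(m,w). -/
open MeasureTheory Filter Set Topology
open scoped ENNReal NNReal

/-- A sequence of measures satisfies the large deviation principle with rate function `I`:
upper bound over closed sets and lower bound over open sets, at exponential speed `n`. -/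
def SatisfiesLDP {X : Type*} [TopologicalSpace X] [MeasurableSpace X]
    (mu : ℕ → Measure X) (I : X → ℝ≥0∞) : Prop :=
  (∀ F : Set X, IsClosed F →
      limsup (fun n : ℕ => (((n : ℝ)⁻¹ : ℝ) : EReal) * ENNReal.log (mu n F)) atTop
        ≤ -(⨅ x ∈ F, (I x : EReal))) ∧
  (∀ G : Set X, IsOpen G →
      -(⨅ x ∈ G, (I x : EReal)) ≤
        liminf (fun n : ℕ => (((n : ℝ)⁻¹ : ℝ) : EReal) * ENNReal.log (mu n G)) atTop)

/-- A good rate function: lower semicontinuous with compact sublevel sets. -/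
def IsGoodRate {X : Type*} [TopologicalSpace X] (I : X → ℝ≥0∞) : Prop :=
  LowerSemicontinuous I ∧ ∀ c : ℝ≥0∞, c ≠ ⊤ → IsCompact {x | I x ≤ c}

/-- The subdifferential of an extended-real-valued function on ℝ at a point. -/
def Subdiff (f : ℝ → EReal) (x : ℝ) : Set ℝ :=
  {k | ∀ y : ℝ, f x + ((k * (y - x) : ℝ) : EReal) ≤ f y}

/-- `(1/n) log x` as an extended real number. -/
noncomputable def expRate (n : ℕ) (x : ℝ≥0∞) : EReal :=
  (((n : ℝ)⁻¹ : ℝ) : EReal) * ENNReal.log x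

/-- The action `W_n = -(1/n) log (dP/dQ)`. -/
noncomputable def action {Λ : Type*} [MeasurableSpace Λ]
    (P Q : Measure Λ) (n : ℕ) (x : Λ) : ℝ :=
  -(n : ℝ)⁻¹ * Real.log ((P.rnDeriv Q) x).toReal


section helpers
open ExpGrowth

lemma expRate_eq (n : ℕ) (x : ℝ≥0∞) : expRate n x = ENNReal.log x / (n : EReal) := by
  unfold expRate
  rw [EReal.div_eq_inv_mul, EReal.coe_inv]
  rfl

lemma ae_rpow_eq {Λ : Type*} [MeasurableSpace Λ] (P Q : Measure Λ) [IsProbabilityMeasure P]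
    [IsProbabilityMeasure Q] (h2 : Q ≪ P) {n : ℕ} (hn : n ≠ 0) (k : ℝ) :
    ∀ᵐ x ∂Q, (P.rnDeriv Q x) ^ k = EReal.exp (((-k * action P Q n x : ℝ) : EReal) * n) := by
  filter_upwards [Measure.rnDeriv_lt_top P Q, Measure.rnDeriv_pos' h2] with x hx hx0
  rw [ENNReal.rpow_eq_exp_mul_log, ENNReal.log_pos_real hx0.ne' hx.ne]
  congr 1
  have : ((n : ℕ) : EReal) = ((n : ℝ) : EReal) := rfl
  rw [this, ← EReal.coe_mul, ← EReal.coe_mul]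
  congr 1
  unfold action
  have : (n : ℝ) ≠ 0 := by exact_mod_cast hn
  field_simp

lemma exp_le_of_le {a b : ℝ} (h : a ≤ b) (n : ℕ) :
    EReal.exp ((a : EReal) * n) ≤ EReal.exp ((b : EReal) * n) := by
  have : ((n : ℕ) : EReal) = ((n : ℝ) : EReal) := rfl
  rw [EReal.exp_le_exp_iff, this, ← EReal.coe_mul, ← EReal.coe_mul, EReal.coe_le_coe_iff]
  gcongr

lemma exp_add_mul (a b : ℝ) (n : ℕ) :
    EReal.exp (((a + b : ℝ) : EReal) * n) =
      EReal.exp ((a : EReal) * n) * EReal.exp ((b : EReal) * n) := by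
  have : ((n : ℕ) : EReal) = ((n : ℝ) : EReal) := rfl
  rw [← EReal.exp_add, this, ← EReal.coe_mul, ← EReal.coe_mul, ← EReal.coe_mul, ← EReal.coe_add]
  congr 2
  ring

lemma measurable_action {Λ : Type*} [MeasurableSpace Λ] (P Q : Measure Λ) (n : ℕ) :
    Measurable (action P Q n) := by
  unfold action
  exact (Real.measurable_log.comp (Measure.measurable_rnDeriv P Q).ennreal_toReal).const_mul _

lemma lint_le {Λ : Type*} [MeasurableSpace Λ] (P Q : Measure Λ) [IsProbabilityMeasure P]
    [IsProbabilityMeasure Q] (h2 : Q ≪ P) {n : ℕ} (hn : n ≠ 0) {k : ℝ} (hk : 0 ≤ k) (a : ℝ)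
    {T : Set Λ} (hT : MeasurableSet T) (h : ∀ x ∈ T, a ≤ action P Q n x) :
    ∫⁻ x in T, (P.rnDeriv Q x) ^ k ∂Q ≤ EReal.exp (((-k * a : ℝ) : EReal) * n) * Q T := by
  rw [← setLIntegral_const]
  refine setLIntegral_mono_ae' hT ?_
  filter_upwards [ae_rpow_eq P Q h2 hn k] with x hx hxT
  rw [hx]
  apply exp_le_of_le
  nlinarith [h x hxT]

lemma le_lint {Λ : Type*} [MeasurableSpace Λ] (P Q : Measure Λ) [IsProbabilityMeasure P]
    [IsProbabilityMeasure Q] (h2 : Q ≪ P) {n : ℕ} (hn : n ≠ 0) {k : ℝ} (hk : 0 ≤ k) (a : ℝ)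
    {T : Set Λ} (hT : MeasurableSet T) (h : ∀ x ∈ T, action P Q n x ≤ a) :
    EReal.exp (((-k * a : ℝ) : EReal) * n) * Q T ≤ ∫⁻ x in T, (P.rnDeriv Q x) ^ k ∂Q := by
  rw [← setLIntegral_const]
  refine setLIntegral_mono_ae' hT ?_
  filter_upwards [ae_rpow_eq P Q h2 hn k] with x hx hxT
  rw [hx]
  apply exp_le_of_le
  nlinarith [h x hxT]

lemma lint_tail {Λ : Type*} [MeasurableSpace Λ] (P Q : Measure Λ) [IsProbabilityMeasure P]
    [IsProbabilityMeasure Q] (h2 : Q ≪ P) {n : ℕ} (hn : n ≠ 0) {k p : ℝ} (hk : k ≤ p) (a : ℝ)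
    {T : Set Λ} (hT : MeasurableSet T) (h : ∀ x ∈ T, action P Q n x ≤ -a) :
    ∫⁻ x in T, (P.rnDeriv Q x) ^ k ∂Q ≤
      EReal.exp (((-(p - k) * a : ℝ) : EReal) * n) * ∫⁻ x in T, (P.rnDeriv Q x) ^ p ∂Q := by
  rw [← lintegral_const_mul _ ((Measure.measurable_rnDeriv P Q).pow_const p)]
  refine setLIntegral_mono_ae' hT ?_
  filter_upwards [ae_rpow_eq P Q h2 hn k, ae_rpow_eq P Q h2 hn p] with x hx hx' hxT
  rw [hx, hx', ← exp_add_mul]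
  apply exp_le_of_le
  nlinarith [h x hxT]

lemma legendre_eq {X : Type*} (C : Set X) (J : X × ℝ → ℝ≥0∞) (k : ℝ) :
    (⨆ w : ℝ, (((-k * w : ℝ) : EReal) - (⨅ m ∈ C, (J (m, w) : EReal))))
      = -⨅ m ∈ C, ⨅ w : ℝ, (((k * w : ℝ) : EReal) + (J (m, w) : EReal)) := by
  apply le_antisymm
  · refine iSup_le fun w => ?_
    set K := ⨅ m ∈ C, ⨅ w : ℝ, (((k * w : ℝ) : EReal) + (J (m, w) : EReal)) with hK
    have h1 : K - ((k * w : ℝ) : EReal) ≤ ⨅ m ∈ C, (J (m, w) : EReal) := by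
      refine le_iInf₂ fun m hm => ?_
      rw [EReal.sub_le_iff_le_add (Or.inl (EReal.coe_ne_bot _)) (Or.inl (EReal.coe_ne_top _)),
        add_comm]
      exact (iInf₂_le m hm).trans (iInf_le _ w)
    rw [EReal.sub_le_iff_le_add (Or.inl (EReal.coe_ne_bot _)) (Or.inl (EReal.coe_ne_top _)),
      add_comm] at h1
    have h2 := EReal.neg_le_neg_iff.2 h1
    rwa [EReal.neg_add (Or.inl (EReal.coe_ne_bot _)) (Or.inl (EReal.coe_ne_top _)),
      ← EReal.coe_neg, ← neg_mul] at h2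
  · rw [EReal.neg_le]
    refine le_iInf₂ fun m hm => le_iInf fun w => ?_
    rw [EReal.neg_le]
    refine le_trans ?_ (le_iSup (fun w : ℝ => (((-k * w : ℝ) : EReal) -
      (⨅ m ∈ C, (J (m, w) : EReal)))) w)
    rw [EReal.neg_add (Or.inl (EReal.coe_ne_bot _)) (Or.inl (EReal.coe_ne_top _)),
      ← EReal.coe_neg, ← neg_mul]
    exact EReal.sub_le_sub le_rfl (iInf₂_le m hm)

lemma var_lower {D : ℕ} {Λ : ℕ → Type*} [∀ n, MeasurableSpace (Λ n)]
    (P Q : ∀ n, Measure (Λ n))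
    [∀ n, IsProbabilityMeasure (P n)] [∀ n, IsProbabilityMeasure (Q n)]
    (habs : ∀ n, P n ≪ Q n ∧ Q n ≪ P n)
    (M : ∀ n, Λ n → (Fin D → ℝ)) (hM : ∀ n, Measurable (M n))
    (J : (Fin D → ℝ) × ℝ → ℝ≥0∞)
    (hL : SatisfiesLDP (fun n => (Q n).map (fun x => (M n x, action (P n) (Q n) n x))) J)
    {k : ℝ} (hk : 0 < k) {G : Set (Fin D → ℝ)} (hG : IsOpen G) :
    -(⨅ m ∈ G, ⨅ w : ℝ, (((k * w : ℝ) : EReal) + (J (m, w) : EReal))) ≤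
      expGrowthInf (fun n => ∫⁻ x in {x | M n x ∈ G}, ((P n).rnDeriv (Q n) x) ^ k ∂(Q n)) := by
  rw [EReal.neg_le]
  refine le_iInf₂ fun m hm => le_iInf fun w => ?_
  rw [EReal.neg_le]
  by_cases hJ : J (m, w) = ⊤
  · rw [hJ, EReal.coe_ennreal_top, EReal.add_top_of_ne_bot (EReal.coe_ne_bot _), EReal.neg_top]
    exact bot_le
  obtain ⟨j, hj⟩ : ∃ j : ℝ, (J (m, w) : EReal) = j :=
    ⟨(J (m, w)).toReal, (EReal.coe_ennreal_toReal hJ).symm⟩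
  rw [hj, ← EReal.coe_add, ← EReal.coe_neg]
  refine EReal.ge_of_forall_gt_iff_ge.1 fun z hz => ?_
  rw [EReal.coe_lt_coe_iff] at hz
  obtain ⟨ε, hε, hzε⟩ : ∃ ε : ℝ, 0 < ε ∧ z = -k * (w + ε) + -j := by
    refine ⟨(-(k * w + j) - z) / k, div_pos (by linarith) hk, ?_⟩
    field_simp
    ring
  have hmeas : ∀ n, Measurable (fun x => (M n x, action (P n) (Q n) n x)) := fun n =>
    (hM n).prodMk (measurable_action _ _ _)
  have hO : IsOpen (G ×ˢ Iio (w + ε)) := hG.prod isOpen_Iio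
  have h1 := hL.2 _ hO
  have h2 : ((-j : ℝ) : EReal) ≤ -⨅ x ∈ G ×ˢ Iio (w + ε), (J x : EReal) := by
    rw [EReal.coe_neg, ← hj, EReal.neg_le_neg_iff]
    exact iInf₂_le (m, w) ⟨hm, by simpa using hε⟩
  have h3 := h2.trans h1
  set u : ℕ → ℝ≥0∞ := fun n => (Q n).map (fun x => (M n x, action (P n) (Q n) n x))
    (G ×ˢ Iio (w + ε)) with hu
  have h4 : ((-j : ℝ) : EReal) ≤ expGrowthInf u := by
    refine h3.trans (le_of_eq ?_)
    unfold expGrowthInf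
    congr 1
    ext n
    exact expRate_eq n _
  set v : ℕ → ℝ≥0∞ := fun n => EReal.exp (((-k * (w + ε) : ℝ) : EReal) * n) with hv
  have h5 : expGrowthInf v = ((-k * (w + ε) : ℝ) : EReal) := expGrowthInf_exp
  calc (z : EReal) = expGrowthInf v + ((-j : ℝ) : EReal) := by rw [h5, hzε, EReal.coe_add]
    _ ≤ expGrowthInf v + expGrowthInf u := by gcongr
    _ ≤ expGrowthInf (v * u) := le_expGrowthInf_mul
    _ ≤ _ := by
      apply expGrowthInf_eventually_monotone
      filter_upwards [eventually_ne_atTop 0] with n hn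
      simp only [Pi.mul_apply, hv, hu]
      rw [Measure.map_apply (hmeas n) hO.measurableSet]
      refine (le_lint (P n) (Q n) (habs n).2 hn hk.le (w + ε)
        (hmeas n hO.measurableSet) fun x hx => (le_of_lt hx.2)).trans ?_
      exact lintegral_mono_set fun x hx => hx.1

lemma var_upper {D : ℕ} {Λ : ℕ → Type*} [∀ n, MeasurableSpace (Λ n)]
    (P Q : ∀ n, Measure (Λ n))
    [∀ n, IsProbabilityMeasure (P n)] [∀ n, IsProbabilityMeasure (Q n)]
    (habs : ∀ n, P n ≪ Q n ∧ Q n ≪ P n)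
    (M : ∀ n, Λ n → (Fin D → ℝ)) (hM : ∀ n, Measurable (M n))
    (J : (Fin D → ℝ) × ℝ → ℝ≥0∞)
    (hL : SatisfiesLDP (fun n => (Q n).map (fun x => (M n x, action (P n) (Q n) n x))) J)
    {k p : ℝ} (hk : 0 < k) (hkp : k < p) {C : Set (Fin D → ℝ)} (hC : IsClosed C)
    (hmom : expGrowthSup (fun n =>
        (∫⁻ x in {x | M n x ∈ C}, ((P n).rnDeriv (Q n) x) ^ p ∂(Q n))) < ⊤) :
    expGrowthSup (fun n => ∫⁻ x in {x | M n x ∈ C}, ((P n).rnDeriv (Q n) x) ^ k ∂(Q n)) ≤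
    -(⨅ m ∈ C, ⨅ w : ℝ, (((k * w : ℝ) : EReal) + (J (m, w) : EReal))) := by
  rw [EReal.le_neg]
  refine EReal.ge_of_forall_gt_iff_ge.1 fun c hc => ?_
  rw [EReal.le_neg, ← EReal.coe_neg]
  refine EReal.le_of_forall_lt_iff_le.1 fun z hz => ?_
  rw [EReal.coe_lt_coe_iff] at hz
  obtain ⟨ε, hε, hzε⟩ : ∃ ε : ℝ, 0 < ε ∧ z = -c + k * ε := by
    refine ⟨(z + c) / k, div_pos (by linarith) hk, ?_⟩
    field_simp
    ring
  obtain ⟨A, hA, -⟩ := EReal.lt_iff_exists_real_btwn.1 hmom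
  have hmeas : ∀ n, Measurable (fun x => (M n x, action (P n) (Q n) n x)) := fun n =>
    (hM n).prodMk (measurable_action _ _ _)
  set ν : ∀ n, Measure (Λ n) := fun n => (Q n).withDensity (fun x => ((P n).rnDeriv (Q n) x) ^ k)
    with hν
  have hνa : ∀ n {T : Set (Λ n)}, MeasurableSet T →
      ν n T = ∫⁻ x in T, ((P n).rnDeriv (Q n) x) ^ k ∂(Q n) := fun n T hT => withDensity_apply _ hT
  -- the truncation levels
  obtain ⟨a, ha⟩ : ∃ a : ℝ, -(p - k) * a + A = z :=
    ⟨(A - z) / (p - k), by field_simp [(sub_pos.2 hkp).ne']; ring⟩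
  obtain ⟨b, hb⟩ : ∃ b : ℝ, -k * b = z := ⟨-z / k, by field_simp⟩
  obtain ⟨N, hN⟩ := exists_nat_gt ((b + a) / ε)
  set S : ∀ n, Set (ℝ) → Set (Λ n) := fun n I =>
    (fun x => (M n x, action (P n) (Q n) n x)) ⁻¹' (C ×ˢ I) with hS
  have hSm : ∀ n {I : Set ℝ}, MeasurableSet I → MeasurableSet (S n I) := fun n I hI =>
    hmeas n (hC.measurableSet.prod hI)
  set w : ℕ → ℝ := fun i => -a + i * ε with hw
  set u1 : ℕ → ℝ≥0∞ := fun n => ν n (S n (Iic (-a))) with hu1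
  set u2 : ℕ → ℝ≥0∞ := fun n => ν n (S n (Ici b)) with hu2
  set u3 : ℕ → ℕ → ℝ≥0∞ := fun i n => ν n (S n (Icc (w i) (w i + ε))) with hu3
  have hcover : (fun n => ∫⁻ x in {x | M n x ∈ C}, ((P n).rnDeriv (Q n) x) ^ k ∂(Q n)) ≤
      u1 + (u2 + ∑ i ∈ Finset.range N, u3 i) := by
    intro n
    simp only [Pi.add_apply, Finset.sum_apply, hu1, hu2, hu3]
    rw [← hνa n (T := {x | M n x ∈ C}) (hM n hC.measurableSet)]
    refine le_trans (measure_mono ?_) ((measure_union_le _ _).trans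
      (add_le_add le_rfl ((measure_union_le _ _).trans
        (add_le_add le_rfl (measure_biUnion_finset_le (Finset.range N)
          (fun i => S n (Icc (w i) (w i + ε))))))))
    intro x hx
    set y := action (P n) (Q n) n x with hy
    by_cases h1 : y ≤ -a
    · exact Or.inl ⟨hx, h1⟩
    by_cases h2 : b ≤ y
    · exact Or.inr (Or.inl ⟨hx, h2⟩)
    push Not at h1 h2
    refine Or.inr (Or.inr ?_)
    have hpos : 0 ≤ (y + a) / ε := div_nonneg (by linarith) hε.le
    have hf1 := Nat.floor_le hpos
    have hf2 := Nat.lt_floor_add_one ((y + a) / ε)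
    rw [le_div_iff₀ hε] at hf1
    rw [div_lt_iff₀ hε] at hf2
    refine mem_iUnion₂.2 ⟨⌊(y + a) / ε⌋₊, ?_, hx, ?_, ?_⟩
    · rw [Finset.mem_range, Nat.floor_lt hpos]
      refine lt_trans ?_ hN
      gcongr
    · simp only [hw]
      linarith
    · simp only [hw]
      linarith
  refine (expGrowthSup_monotone hcover).trans ?_
  rw [expGrowthSup_add, expGrowthSup_add, expGrowthSup_sum]
  refine sup_le ?_ (sup_le ?_ (iSup₂_le fun i _ => ?_))
  · apply Eventually.expGrowthSup_le
    filter_upwards [eventually_ne_atTop 0, eventually_le_exp hA] with n hn hAn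
    simp only [hu1]
    rw [hνa n (hSm n measurableSet_Iic), ← ha, exp_add_mul]
    refine (lint_tail (P n) (Q n) (habs n).2 hn hkp.le a (hSm n measurableSet_Iic)
      fun x hx => hx.2).trans ?_
    gcongr
    refine le_trans ?_ hAn
    exact lintegral_mono_set fun x hx => hx.1
  · apply Eventually.expGrowthSup_le
    filter_upwards [eventually_ne_atTop 0] with n hn
    simp only [hu2]
    rw [hνa n (hSm n measurableSet_Ici), ← hb]
    refine (lint_le (P n) (Q n) (habs n).2 hn hk.le b (hSm n measurableSet_Ici)
      fun x hx => hx.2).trans ?_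
    exact mul_le_of_le_one_right' prob_le_one
  · have hCl : IsClosed (C ×ˢ Icc (w i) (w i + ε)) := hC.prod isClosed_Icc
    have h1 := hL.1 _ hCl
    have h2 : -(⨅ x ∈ C ×ˢ Icc (w i) (w i + ε), (J x : EReal)) ≤
        ((-c + k * (w i + ε) : ℝ) : EReal) := by
      rw [EReal.neg_le, ← EReal.coe_neg]
      refine le_iInf₂ fun x hx => ?_
      have h3 : (c : EReal) ≤ ((k * x.2 : ℝ) : EReal) + (J x : EReal) :=
        hc.le.trans ((iInf₂_le x.1 hx.1).trans (iInf_le _ x.2))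
      by_cases hJ : J x = ⊤
      · rw [hJ]; exact le_top
      obtain ⟨j, hj⟩ : ∃ j : ℝ, (J x : EReal) = j :=
        ⟨(J x).toReal, (EReal.coe_ennreal_toReal hJ).symm⟩
      rw [hj, ← EReal.coe_add, EReal.coe_le_coe_iff] at h3
      rw [hj, EReal.coe_le_coe_iff]
      have := hx.2.2
      nlinarith
    set q : ℕ → ℝ≥0∞ := fun n => (Q n).map (fun x => (M n x, action (P n) (Q n) n x))
      (C ×ˢ Icc (w i) (w i + ε)) with hq
    have h4 : expGrowthSup q ≤ ((-c + k * (w i + ε) : ℝ) : EReal) := by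
      refine le_trans (le_of_eq ?_) (h1.trans h2)
      unfold expGrowthSup
      congr 1
      ext n
      exact (expRate_eq n _).symm
    set v : ℕ → ℝ≥0∞ := fun n => EReal.exp (((-k * w i : ℝ) : EReal) * n) with hv
    have h5 : expGrowthSup v = ((-k * w i : ℝ) : EReal) := expGrowthSup_exp
    calc expGrowthSup (u3 i) ≤ expGrowthSup (v * q) := by
          apply expGrowthSup_eventually_monotone
          filter_upwards [eventually_ne_atTop 0] with n hn
          simp only [Pi.mul_apply, hv, hq, hu3]
          rw [Measure.map_apply (hmeas n) hCl.measurableSet, hνa n (hSm n measurableSet_Icc)]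
          exact lint_le (P n) (Q n) (habs n).2 hn hk.le (w i) (hSm n measurableSet_Icc)
            fun x hx => hx.2.1
      _ ≤ expGrowthSup v + expGrowthSup q := by
          apply expGrowthSup_mul_le
          · rw [h5]; exact Or.inl (EReal.coe_ne_bot _)
          · rw [h5]; exact Or.inl (EReal.coe_ne_top _)
      _ ≤ expGrowthSup v + ((-c + k * (w i + ε) : ℝ) : EReal) := by gcongr
      _ = (z : EReal) := by
          rw [h5, ← EReal.coe_add, hzε]
          congr 1
          ring

lemma coe_biInf {X : Type*} (C : Set X) (I : X → ℝ≥0∞) :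
    (⨅ m ∈ C, (I m : EReal)) = ((⨅ m ∈ C, I m : ℝ≥0∞) : EReal) := by
  apply le_antisymm
  · have h0 : (0 : EReal) ≤ ⨅ m ∈ C, (I m : EReal) :=
      le_iInf₂ fun m _ => EReal.coe_ennreal_nonneg _
    rw [← EReal.coe_toENNReal h0, EReal.coe_ennreal_le_coe_ennreal_iff]
    refine le_iInf₂ fun m hm => ?_
    rw [← EReal.coe_ennreal_le_coe_ennreal_iff, EReal.coe_toENNReal h0]
    exact iInf₂_le m hm
  · exact le_iInf₂ fun m hm => EReal.coe_ennreal_le_coe_ennreal_iff.2 (iInf₂_le m hm)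

lemma lint_one {Λ : Type*} [MeasurableSpace Λ] (P Q : Measure Λ) [IsProbabilityMeasure P]
    [IsProbabilityMeasure Q] (h : P ≪ Q) {X : Type*} [MeasurableSpace X] (M : Λ → X)
    (hM : Measurable M) {A : Set X} (hA : MeasurableSet A) :
    ∫⁻ x in {x | M x ∈ A}, (P.rnDeriv Q x) ^ (1 : ℝ) ∂Q = P.map M A := by
  simp only [ENNReal.rpow_one]
  rw [Measure.setLIntegral_rnDeriv h, Measure.map_apply hM hA]
  rfl

end helpers

/-- Under Assumptions 1, 2 and 3, `Q_n` is asymptotically efficient if and only if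
`λ_Q^B(-2) = 2 λ_Q^B(-1)`, where `λ_Q^B(k) = sup_w (k w - I_Q^B(w))` is the
Legendre–Fenchel transform of `I_Q^B(w) = inf_(m ∈ closure B) J_Q(m,w)`. -/
theorem efficiency_legendre_criterion
    {D : ℕ} {Λ : ℕ → Type*} [∀ n, MeasurableSpace (Λ n)]
    (P Q : ∀ n, Measure (Λ n))
    [∀ n, IsProbabilityMeasure (P n)] [∀ n, IsProbabilityMeasure (Q n)]
    (habs : ∀ n, P n ≪ Q n ∧ Q n ≪ P n)
    (M : ∀ n, Λ n → (Fin D → ℝ)) (hM : ∀ n, Measurable (M n))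
    (B : Set (Fin D → ℝ)) (hB : MeasurableSet B)
    (I_P : (Fin D → ℝ) → ℝ≥0∞)
    (hLDP_M : SatisfiesLDP (fun n => (P n).map (M n)) I_P)
    (hIPgood : IsGoodRate I_P)
    (hIPB : (⨅ m ∈ interior B, I_P m) = ⨅ m ∈ closure B, I_P m)
    (hIPBfin : (⨅ m ∈ closure B, I_P m) ≠ ⊤)
    (δ : ℝ) (hδ : 0 < δ)
    (hmom : limsup (fun n : ℕ => expRate n
        (∫⁻ x in {x | M n x ∈ closure B},
          ((P n).rnDeriv (Q n) x) ^ ((2 : ℝ) + δ) ∂(Q n))) atTop < ⊤)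
    (J_P J_Q : (Fin D → ℝ) × ℝ → ℝ≥0∞)
    (hLDP_P : SatisfiesLDP (fun n => (P n).map (fun x => (M n x, action (P n) (Q n) n x))) J_P)
    (hLDP_Q : SatisfiesLDP (fun n => (Q n).map (fun x => (M n x, action (P n) (Q n) n x))) J_Q)
    (hJPgood : IsGoodRate J_P) (hJQgood : IsGoodRate J_Q)
    (hdom : {p | J_P p ≠ ⊤} = {p | J_Q p ≠ ⊤})
    (hne : {p | J_P p ≠ ⊤}.Nonempty)
    (hBgood : (⨅ m ∈ interior B, ⨅ w : ℝ, (((2 * w : ℝ) : EReal) + (J_Q (m, w) : EReal)))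
      = ⨅ m ∈ closure B, ⨅ w : ℝ, (((2 * w : ℝ) : EReal) + (J_Q (m, w) : EReal)))
    :
    Tendsto (fun n : ℕ => -expRate n (∫⁻ x in {x | M n x ∈ B}, ((P n).rnDeriv (Q n) x) ^ 2 ∂(Q n))) atTop
        (𝓝 (2 * ⨅ m ∈ closure B, (I_P m : EReal)))
      ↔ (⨆ w : ℝ, ((((-2 : ℝ) * w : ℝ) : EReal) - ((⨅ m ∈ closure B, J_Q (m, w)) : EReal)))
          = 2 * ⨆ w : ℝ, ((((-1 : ℝ) * w : ℝ) : EReal)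
            - ((⨅ m ∈ closure B, J_Q (m, w)) : EReal)) := by
  have hsup : ∀ u : ℕ → ℝ≥0∞, limsup (fun n => expRate n (u n)) atTop =
      ExpGrowth.expGrowthSup u := by
    intro u
    unfold ExpGrowth.expGrowthSup
    congr 1
    ext n
    exact expRate_eq n _
  have hinf : ∀ u : ℕ → ℝ≥0∞, liminf (fun n => expRate n (u n)) atTop =
      ExpGrowth.expGrowthInf u := by
    intro u
    unfold ExpGrowth.expGrowthInf
    congr 1
    ext n
    exact expRate_eq n _
  rw [hsup] at hmom
  have hlow := fun {k : ℝ} (hk : 0 < k) {G : Set (Fin D → ℝ)} (hG : IsOpen G) =>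
    var_lower P Q habs M hM J_Q hLDP_Q hk hG
  -- the second moment
  have hT : Tendsto (fun n : ℕ => -expRate n (∫⁻ x in {x | M n x ∈ B},
      ((P n).rnDeriv (Q n) x) ^ 2 ∂(Q n))) atTop
      (𝓝 (⨅ m ∈ closure B, ⨅ w : ℝ, (((2 * w : ℝ) : EReal) + (J_Q (m, w) : EReal)))) := by
    rw [← neg_neg (⨅ m ∈ closure B, ⨅ w : ℝ, (((2 * w : ℝ) : EReal) + (J_Q (m, w) : EReal)))]
    refine (continuous_neg.tendsto _).comp ?_
    simp_rw [← ENNReal.rpow_two]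
    refine tendsto_of_le_liminf_of_limsup_le ?_ ?_
    · rw [hinf, ← hBgood]
      refine (hlow two_pos isOpen_interior).trans (ExpGrowth.expGrowthInf_monotone fun n => ?_)
      exact lintegral_mono_set fun x hx => interior_subset (s := B) hx
    · rw [hsup]
      refine le_trans (ExpGrowth.expGrowthSup_monotone fun n => ?_)
        (var_upper P Q habs M hM J_Q hLDP_Q two_pos (by linarith : (2 : ℝ) < 2 + δ)
          isClosed_closure hmom)
      exact lintegral_mono_set fun x hx => subset_closure (s := B) hx
  -- the first moment
  have hK1 : (⨅ m ∈ closure B, ⨅ w : ℝ, (((1 * w : ℝ) : EReal) + (J_Q (m, w) : EReal))) =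
      ⨅ m ∈ closure B, (I_P m : EReal) := by
    have hone : ∀ {A : Set (Fin D → ℝ)}, MeasurableSet A →
        (fun n => ∫⁻ x in {x | M n x ∈ A}, ((P n).rnDeriv (Q n) x) ^ (1 : ℝ) ∂(Q n)) =
          fun n => (P n).map (M n) A := by
      intro A hA
      ext n
      exact lint_one (P n) (Q n) (habs n).1 (M n) (hM n) hA
    apply le_antisymm
    · rw [coe_biInf, ← hIPB, ← coe_biInf, ← EReal.neg_le_neg_iff]
      have h1 : _ ≤ liminf (fun n => expRate n ((P n).map (M n) (interior B))) atTop :=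
        hLDP_M.2 _ (isOpen_interior (s := B))
      rw [hinf] at h1
      refine (h1.trans ExpGrowth.expGrowthInf_le_expGrowthSup).trans ?_
      refine le_trans (ExpGrowth.expGrowthSup_monotone (b := fun n => (P n).map (M n) (closure B))
        fun n => ?_)
        ?_
      · exact measure_mono (interior_subset.trans subset_closure)
      · rw [← hone isClosed_closure.measurableSet]
        exact var_upper P Q habs M hM J_Q hLDP_Q one_pos (by linarith : (1 : ℝ) < 2 + δ)
          isClosed_closure hmom
    · refine le_iInf₂ fun m hm => le_iInf fun w => (iInf₂_le m hm).trans ?_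
      refine EReal.ge_of_forall_gt_iff_ge.1 fun c hc => ?_
      have hlsc : LowerSemicontinuous (fun y => (I_P y : EReal)) :=
        continuous_coe_ennreal_ereal.comp_lowerSemicontinuous hIPgood.1
          (fun a b hab => EReal.coe_ennreal_le_coe_ennreal_iff.2 hab)
      have hnb : {y | (c : EReal) < I_P y} ∈ 𝓝 m := hlsc m _ hc
      obtain ⟨V, hV, hVc, hVs⟩ := exists_mem_nhds_isClosed_subset hnb
      have h1 := hlow one_pos (isOpen_interior (s := V))
      rw [hone isOpen_interior.measurableSet] at h1
      have h2 : limsup (fun n => expRate n ((P n).map (M n) V)) atTop ≤ _ := hLDP_M.1 V hVc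
      rw [hsup] at h2
      have h3 : ExpGrowth.expGrowthInf (fun n => (P n).map (M n) (interior V)) ≤
          ExpGrowth.expGrowthSup (fun n => (P n).map (M n) V) :=
        (ExpGrowth.expGrowthInf_monotone fun n => measure_mono interior_subset).trans
          ExpGrowth.expGrowthInf_le_expGrowthSup
      have h4 := EReal.neg_le_neg_iff.1 ((h1.trans h3).trans h2)
      have h5 : (c : EReal) ≤ ⨅ x ∈ V, (I_P x : EReal) := le_iInf₂ fun x hx => (hVs hx).le
      exact (h5.trans h4).trans
        ((iInf₂_le m (mem_interior_iff_mem_nhds.2 hV)).trans (iInf_le _ w))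
  rw [legendre_eq, legendre_eq, hK1, mul_neg, neg_inj]
  exact ⟨fun h => tendsto_nhds_unique hT h, fun h => h ▸ hT⟩
end

section
/- Let X₁, X₂, … be i.i.d. random variables with the exponential distribution of parameter 1 (density e^{−x} on [0,∞)), and let M_n = (1/n) Σ_{i=1}^n X_i. Then for every b > 1, lim_{n→∞} −(1/n) log P(M_n ≥ b) = b − 1 − log b. -/
open MeasureTheory Filter Set Topology
open scoped ENNReal NNReal

open ProbabilityTheory

instance : IsProbabilityMeasure (expMeasure 1) := isProbabilityMeasure_expMeasure one_pos

/-- Tail of a sum of `n` i.i.d. `Exp(1)` variables. -/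
noncomputable def expTail (n : ℕ) (t : ℝ) : ℝ≥0∞ :=
  (Measure.pi fun _ : Fin n => expMeasure 1) {x : Fin n → ℝ | t ≤ ∑ i, x i}

lemma measurable_expTail (n : ℕ) : Measurable (expTail n) := by
  have : Antitone (expTail n) := by
    intro s t hst
    exact measure_mono fun x hx => le_trans hst hx
  exact this.measurable

lemma lintegral_expMeasure_one {f : ℝ → ℝ≥0∞} (hf : Measurable f) :
    ∫⁻ x, f x ∂(expMeasure 1) = ∫⁻ x, exponentialPDF 1 x * f x := by
  have hm : Measurable (exponentialPDF 1) :=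
    (measurable_exponentialPDFReal 1).ennreal_ofReal
  exact lintegral_withDensity_eq_lintegral_mul _ hm hf

lemma expTail_succ (n : ℕ) (t : ℝ) :
    expTail (n + 1) t = ∫⁻ x, exponentialPDF 1 x * expTail n (t - x) := by
  have hmeas : Measurable fun x : ℝ => expTail n (t - x) :=
    (measurable_expTail n).comp (measurable_const.sub measurable_id)
  rw [← lintegral_expMeasure_one hmeas]
  have h := measurePreserving_piFinSuccAbove (fun _ : Fin (n + 1) => expMeasure 1) 0
  have hs : MeasurableSet {p : ℝ × (Fin n → ℝ) | t ≤ p.1 + ∑ i, p.2 i} :=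
    measurableSet_le measurable_const (by fun_prop)
  have h2 := h.measure_preimage hs.nullMeasurableSet
  rw [Measure.prod_apply hs] at h2
  have e1 : (MeasurableEquiv.piFinSuccAbove (fun _ : Fin (n + 1) => ℝ) 0) ⁻¹'
      {p : ℝ × (Fin n → ℝ) | t ≤ p.1 + ∑ i, p.2 i}
      = {x : Fin (n + 1) → ℝ | t ≤ ∑ i, x i} := by
    ext x
    simp [Fin.sum_univ_succ, MeasurableEquiv.piFinSuccAbove, Fin.insertNthEquiv, Fin.tail]
  rw [e1] at h2
  unfold expTail
  rw [h2]
  refine lintegral_congr fun x => ?_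
  congr 1
  ext y
  simp [add_comm]

lemma expTail_zero_le {b : ℝ} (hb : 1 < b) (t : ℝ) :
    expTail 0 t ≤ ENNReal.ofReal (Real.exp (-((1 - b⁻¹) * t))) := by
  have hθ : 0 < 1 - b⁻¹ := by
    have := inv_lt_one_of_one_lt₀ hb
    linarith
  by_cases ht : t ≤ 0
  · refine le_trans prob_le_one ?_
    rw [ENNReal.one_le_ofReal]
    apply Real.one_le_exp
    nlinarith
  · simp [expTail, ht]

lemma expTail_le {b : ℝ} (hb : 1 < b) (n : ℕ) (t : ℝ) :
    expTail n t ≤ ENNReal.ofReal (b ^ n * Real.exp (-((1 - b⁻¹) * t))) := by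
  have hb0 : 0 < b := by linarith
  induction n generalizing t with
  | zero => simpa using expTail_zero_le hb t
  | succ n ih =>
    rw [expTail_succ]
    calc ∫⁻ x, exponentialPDF 1 x * expTail n (t - x)
        ≤ ∫⁻ x, ENNReal.ofReal (b ^ (n + 1) * Real.exp (-((1 - b⁻¹) * t)))
            * exponentialPDF b⁻¹ x := by
          refine lintegral_mono fun x => ?_
          refine (mul_le_mul_right (ih (t - x)) _).trans ?_
          rcases lt_or_ge x 0 with hx | hx
          · simp [exponentialPDF_of_neg hx]
          · rw [exponentialPDF_of_nonneg hx, exponentialPDF_of_nonneg hx,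
              ← ENNReal.ofReal_mul (by positivity), ← ENNReal.ofReal_mul (by positivity)]
            apply ENNReal.ofReal_le_ofReal
            apply le_of_eq
            have h1 : Real.exp (-(1 * x)) * Real.exp (-((1 - b⁻¹) * (t - x)))
                = Real.exp (-((1 - b⁻¹) * t)) * Real.exp (-(b⁻¹ * x)) := by
              rw [← Real.exp_add, ← Real.exp_add]
              congr 1
              ring
            have h2 : b ^ (n + 1) * b⁻¹ = b ^ n := by
              rw [pow_succ, mul_assoc, mul_inv_cancel₀ hb0.ne', mul_one]
            calc _ = b ^ n * (Real.exp (-(1 * x)) * Real.exp (-((1 - b⁻¹) * (t - x)))) := by ring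
              _ = _ := by
                rw [h1, ← h2]
                ring
      _ = ENNReal.ofReal (b ^ (n + 1) * Real.exp (-((1 - b⁻¹) * t))) := by
          rw [lintegral_const_mul' _ _ ENNReal.ofReal_ne_top,
            lintegral_exponentialPDF_eq_one (by positivity), mul_one]

lemma le_expTail (n : ℕ) (t : ℝ) (ht : 0 ≤ t) :
    ENNReal.ofReal (Real.exp (-t) * (t ^ n / n.factorial)) ≤ expTail (n + 1) t := by
  induction n generalizing t with
  | zero =>
    rw [expTail_succ]
    calc ENNReal.ofReal (Real.exp (-t) * (t ^ 0 / (Nat.factorial 0)))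
        = ∫⁻ x, ENNReal.ofReal (Real.exp (-t)) * exponentialPDF 1 (x - t) := by
          rw [lintegral_const_mul' _ _ ENNReal.ofReal_ne_top,
            lintegral_sub_right_eq_self (fun x => exponentialPDF 1 x) t,
            lintegral_exponentialPDF_eq_one one_pos]
          simp
      _ ≤ _ := by
          refine lintegral_mono fun x => ?_
          rcases lt_or_ge x t with hx | hx
          · simp [exponentialPDF_of_neg (sub_neg.2 hx)]
          · have h0 : expTail 0 (t - x) = 1 := by simp [expTail, hx]
            simp only [h0, mul_one]
            rw [exponentialPDF_of_nonneg (sub_nonneg.2 hx),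
              exponentialPDF_of_nonneg (ht.trans hx), ← ENNReal.ofReal_mul (by positivity)]
            apply ENNReal.ofReal_le_ofReal
            rw [one_mul, one_mul, ← Real.exp_add]
            apply le_of_eq
            ring_nf
  | succ n ih =>
    rw [expTail_succ]
    have hI : ∫ x in (0 : ℝ)..t, Real.exp (-t) * ((t - x) ^ n / n.factorial)
        = Real.exp (-t) * (t ^ (n + 1) / (n + 1).factorial) := by
      rw [intervalIntegral.integral_const_mul, intervalIntegral.integral_div,
        intervalIntegral.integral_comp_sub_left (fun x => x ^ n) t]
      simp only [sub_self, sub_zero, integral_pow]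
      rw [Nat.factorial_succ]
      push_cast
      have : (n.factorial : ℝ) ≠ 0 := by positivity
      field_simp
      simp
    rw [← hI, intervalIntegral.integral_of_le ht, ofReal_integral_eq_lintegral_ofReal]
    · refine le_trans ?_ (setLIntegral_le_lintegral (Ioc 0 t) _)
      refine setLIntegral_mono' measurableSet_Ioc fun x hx => ?_
      refine le_trans ?_ (mul_le_mul_right (ih (t - x) (sub_nonneg.2 hx.2)) _)
      rw [exponentialPDF_of_nonneg hx.1.le, ← ENNReal.ofReal_mul (by positivity)]
      apply ENNReal.ofReal_le_ofReal
      apply le_of_eq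
      rw [one_mul, one_mul, ← mul_assoc, ← Real.exp_add]
      congr 2
      ring
    · exact (Continuous.integrableOn_Icc (by fun_prop)).mono_set Ioc_subset_Icc_self
    · refine (ae_restrict_iff' measurableSet_Ioc).2 (ae_of_all _ fun x hx => ?_)
      have := sub_nonneg.2 hx.2
      simp only [Pi.zero_apply]
      positivity

lemma expRate_mono (n : ℕ) {x y : ℝ≥0∞} (h : x ≤ y) : expRate n x ≤ expRate n y := by
  unfold expRate
  apply mul_le_mul_of_nonneg_left (ENNReal.log_monotone h)
  exact_mod_cast (by positivity : (0 : ℝ) ≤ (n : ℝ)⁻¹)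

lemma neg_expRate_ofReal (n : ℕ) {x : ℝ} (hx : 0 < x) :
    -expRate n (ENNReal.ofReal x) = ((-((n : ℝ)⁻¹ * Real.log x) : ℝ) : EReal) := by
  unfold expRate
  rw [ENNReal.log_ofReal_of_pos hx]
  norm_cast

lemma tendsto_log_factorial :
    Tendsto (fun n : ℕ => (n : ℝ)⁻¹ * Real.log n.factorial - Real.log n) atTop (𝓝 (-1)) := by
  have h1 : Tendsto (fun n : ℕ => Real.log (Stirling.stirlingSeq n)) atTop
      (𝓝 (Real.log (√Real.pi))) :=
    Stirling.tendsto_stirlingSeq_sqrt_pi.log (by positivity)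
  have h0 : Tendsto (fun n : ℕ => (n : ℝ)⁻¹) atTop (𝓝 0) := tendsto_inv_atTop_nhds_zero_nat
  have h2 : Tendsto (fun n : ℕ => (n : ℝ)⁻¹ * Real.log n) atTop (𝓝 0) := by
    have := (Real.isLittleO_log_id_atTop.tendsto_div_nhds_zero).comp
      (tendsto_natCast_atTop_atTop (R := ℝ))
    refine this.congr fun n => ?_
    simp [div_eq_inv_mul]
  have h3 := (((h0.mul h1).add ((h2.add (h0.mul_const (Real.log 2))).mul_const (1 / 2))).sub_const 1)
  simp only [zero_mul, add_zero, zero_sub] at h3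
  refine h3.congr' ?_
  filter_upwards [eventually_gt_atTop 0] with n hn
  have hn' : (n : ℝ) ≠ 0 := by positivity
  rw [Stirling.log_stirlingSeq_formula, Real.log_div hn' (Real.exp_pos 1).ne', Real.log_exp,
    Real.log_mul two_ne_zero hn']
  field_simp
  ring

/-- Cramér's theorem for the exponential distribution: for i.i.d. `Exp(1)` random variables
and `b > 1`, `-(1/n) log P(M_n ≥ b) → b - 1 - log b`. -/
theorem exponential_cramer (b : ℝ) (hb : 1 < b) :
    Tendsto (fun n : ℕ => -expRate n
        ((Measure.pi fun _ : Fin n => expMeasure 1)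
          {x : Fin n → ℝ | b ≤ (n : ℝ)⁻¹ * ∑ i, x i})) atTop
      (𝓝 ((b - 1 - Real.log b : ℝ) : EReal)) := by
  have hb0 : 0 < b := by linarith
  have hset : ∀ n : ℕ, 0 < n → {x : Fin n → ℝ | b ≤ (n : ℝ)⁻¹ * ∑ i, x i}
      = {x : Fin n → ℝ | n * b ≤ ∑ i, x i} := by
    intro n hn
    ext x
    have hn' : (0 : ℝ) < n := by positivity
    simp only [mem_ofPred_eq]
    rw [← div_eq_inv_mul, le_div_iff₀ hn', mul_comm]
  have hlow : Tendsto (fun n : ℕ => (n : ℝ)⁻¹ * Real.log n.factorial - Real.log n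
      + (n : ℝ)⁻¹ * Real.log b + (b - Real.log b)) atTop (𝓝 (b - 1 - Real.log b)) := by
    have h0 : Tendsto (fun n : ℕ => (n : ℝ)⁻¹) atTop (𝓝 0) := tendsto_inv_atTop_nhds_zero_nat
    have := (tendsto_log_factorial.add (h0.mul_const (Real.log b))).add_const (b - Real.log b)
    convert this using 2
    ring
  refine tendsto_of_tendsto_of_tendsto_of_le_of_le' tendsto_const_nhds
    ((continuous_coe_real_ereal.tendsto _).comp hlow) ?_ ?_
  · filter_upwards [eventually_gt_atTop 0] with n hn
    have hn' : (n : ℝ) ≠ 0 := by positivity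
    rw [hset n hn]
    have h := EReal.neg_le_neg_iff.2 (expRate_mono n (expTail_le hb n (n * b)))
    rw [neg_expRate_ofReal n (by positivity)] at h
    refine le_trans (le_of_eq ?_) h
    rw [Real.log_mul (by positivity) (by positivity), Real.log_exp, Real.log_pow]
    congr 1
    field_simp
    ring
  · filter_upwards [eventually_gt_atTop 0] with n hn
    rw [hset n hn]
    obtain ⟨m, rfl⟩ : ∃ m, n = m + 1 := ⟨n - 1, by omega⟩
    have h := EReal.neg_le_neg_iff.2 (expRate_mono (m + 1)
      (le_expTail m ((m + 1 : ℕ) * b) (by positivity)))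
    rw [neg_expRate_ofReal (m + 1) (by positivity)] at h
    refine le_trans h (le_of_eq ?_)
    have hn' : ((m + 1 : ℕ) : ℝ) ≠ 0 := by positivity
    have hf : ((m.factorial : ℕ) : ℝ) ≠ 0 := by positivity
    simp only [Function.comp]
    congr 1
    rw [Real.log_mul (by positivity) (by positivity), Real.log_exp,
      Real.log_div (by positivity) hf, Real.log_pow, Real.log_mul hn' hb0.ne',
      Nat.factorial_succ, Nat.cast_mul, Real.log_mul hn' hf]
    field_simp
    push_cast
    ring
end
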